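/- For all natural numbers m and n, the ℓ-adic q-binomial coefficients satisfy ⟨m+n; m⟩_λ = ⟨m+n; n⟩_λ. -/

import Mathlib

/-!
Digit by digit, starting from the units. If the lowest digits `a`, `b` of `m`, `n` satisfy
`a + b < ℓ`, there is no carry: the lowest digit of `m + n` is `a + b`, the factors `[a+b; a]` and
`[a+b; b]` agree by the usual symmetry (both equal `[a+b]! / ([a]! [b]!)`, and these q-factorials
do not vanish because `ℓ` is odd), and the remaining digits are those of `m / ℓ` and `n / ℓ`.
If `a + b ≥ ℓ`, the lowest digit of `m + n` is `a + b - ℓ`, which is smaller than both `a` and `b`,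
so both products contain a zero factor (`qbinom_eq_zero`).
-/

noncomputable section

namespace QD

/-- The q-binomial coefficient `[m; n]_q = ∏_{j=1}^{n} (q^{m-j+1} - q^{-m+j-1})/(q^j - q^{-j})`. -/
def qbinom (q : ℂ) (m : ℤ) (n : ℕ) : ℂ :=
  ∏ j ∈ Finset.range n, (q ^ (m - j) - q ^ (-m + j)) / (q ^ ((j : ℤ) + 1) - q ^ (-(j : ℤ) - 1))

/-- The `i`-th digit of `m` in base `ℓ`. -/
def digit (ℓ m i : ℕ) : ℕ := m / ℓ ^ i % ℓ

/-- The `ℓ`-adic q-binomial coefficient `⟨m; n⟩_q = ∏_{i ≥ 0} [m_i; n_i]_q`, where `m_i, n_i`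
are the base-`ℓ` digits of `m` and `n`.  (All factors with `i > m + n` equal `1` since the
corresponding digits vanish when `ℓ ≥ 2`, so the product may be cut off at `m + n + 1`.) -/
def lbinom (ℓ : ℕ) (q : ℂ) (m n : ℕ) : ℂ :=
  ∏ i ∈ Finset.range (m + n + 1), qbinom q (digit ℓ m i) (digit ℓ n i)

/-- The (unnormalised) q-factorial `∏_{j=1}^{n} (q^j - q^{-j})`. -/
def qfact (q : ℂ) (n : ℕ) : ℂ :=
  ∏ j ∈ Finset.range n, (q ^ ((j : ℤ) + 1) - q ^ (-(j : ℤ) - 1))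

lemma qfact_ne_zero {ℓ : ℕ} (hodd : Odd ℓ) {q : ℂ} (hq : IsPrimitiveRoot q ℓ) {n : ℕ}
    (hn : n < ℓ) : qfact q n ≠ 0 := by
  have hq0 : q ≠ 0 := hq.ne_zero (by omega)
  refine Finset.prod_ne_zero_iff.2 fun j hj h => ?_
  rw [Finset.mem_range] at hj
  -- A vanishing factor means `q ^ (2 * (j + 1)) = 1`, so `ℓ ∣ j + 1` as `ℓ` is odd.
  have h1 : q ^ (2 * (j + 1)) = 1 := by
    have h2 : q ^ ((j : ℤ) + 1) = q ^ (-((j : ℤ) + 1)) := by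
      rw [neg_add']
      exact sub_eq_zero.1 h
    have h3 : q ^ (((j : ℤ) + 1) + ((j : ℤ) + 1)) = 1 := by
      rw [zpow_add₀ hq0]
      nth_rewrite 1 [h2]
      rw [← zpow_add₀ hq0, neg_add_cancel, zpow_zero]
    rw [← zpow_natCast, ← h3]
    congr 1
    push_cast
    ring
  have h4 : ℓ ∣ j + 1 :=
    (Nat.Coprime.dvd_mul_left (Nat.coprime_two_right.2 hodd)).1 (hq.dvd_of_pow_eq_one _ h1)
  have := Nat.le_of_dvd (by omega) h4
  omega

/-- `[a+b]! = ([a+b] [a+b-1] ⋯ [b+1]) [b]!`. -/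
lemma prod_mul_qfact (q : ℂ) (a b : ℕ) :
    (∏ j ∈ Finset.range a,
      (q ^ (((a + b : ℕ) : ℤ) - j) - q ^ (-((a + b : ℕ) : ℤ) + j))) * qfact q b =
      qfact q (a + b) := by
  induction a with
  | zero => simp
  | succ a ih =>
    rw [Finset.prod_range_succ', Nat.add_right_comm]
    have hR : qfact q (a + b + 1) = qfact q (a + b) *
        (q ^ (((a + b : ℕ) : ℤ) + 1) - q ^ (-((a + b : ℕ) : ℤ) - 1)) :=
      Finset.prod_range_succ _ _
    rw [hR, ← ih, mul_right_comm]
    refine congrArg₂ _ (congrArg (· * _) (Finset.prod_congr rfl fun j _ => ?_)) ?_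
    · refine congrArg₂ (q ^ · - q ^ ·) ?_ ?_ <;> push_cast <;> ring
    · refine congrArg₂ (q ^ · - q ^ ·) ?_ ?_ <;> push_cast <;> ring

lemma qbinom_symm {ℓ : ℕ} (hodd : Odd ℓ) {q : ℂ} (hq : IsPrimitiveRoot q ℓ) {a b : ℕ}
    (hab : a + b < ℓ) : qbinom q ((a + b : ℕ) : ℤ) a = qbinom q ((a + b : ℕ) : ℤ) b := by
  have ha := qfact_ne_zero hodd hq (n := a) (by omega)
  have hb := qfact_ne_zero hodd hq (n := b) (by omega)
  have h1 := prod_mul_qfact q a b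
  have h2 := prod_mul_qfact q b a
  rw [Nat.add_comm b a] at h2
  unfold qbinom
  rw [Finset.prod_div_distrib, Finset.prod_div_distrib]
  change _ / qfact q a = _ / qfact q b
  rw [div_eq_div_iff ha hb, h1, h2]

lemma qbinom_eq_zero (q : ℂ) {a b : ℕ} (h : a < b) : qbinom q (a : ℤ) b = 0 :=
  Finset.prod_eq_zero (Finset.mem_range.2 h) (by simp)

lemma digit_zero (ℓ m : ℕ) : digit ℓ m 0 = m % ℓ := by simp [digit]

lemma digit_succ (ℓ m i : ℕ) : digit ℓ m (i + 1) = digit ℓ (m / ℓ) i := by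
  rw [digit, digit, pow_succ', Nat.div_div_eq_div_mul]

/-- The symmetry for products truncated after any number `N` of digits; the truncation is kept
independent of `m` and `n` so that the induction can pass to `m / ℓ` and `n / ℓ`. -/
lemma prod_digits_symm {ℓ : ℕ} (hℓ : 1 < ℓ) (hodd : Odd ℓ) {q : ℂ} (hq : IsPrimitiveRoot q ℓ)
    (N m n : ℕ) :
    ∏ i ∈ Finset.range N, qbinom q (digit ℓ (m + n) i) (digit ℓ m i) =
      ∏ i ∈ Finset.range N, qbinom q (digit ℓ (m + n) i) (digit ℓ n i) := by
  induction N generalizing m n with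
  | zero => simp
  | succ N ih =>
    rw [Finset.prod_range_succ', Finset.prod_range_succ']
    simp only [digit_zero, digit_succ]
    have hm := Nat.mod_lt m (show ℓ > 0 by omega)
    have hn := Nat.mod_lt n (show ℓ > 0 by omega)
    by_cases h : m % ℓ + n % ℓ < ℓ
    · rw [Nat.add_div_eq_of_add_mod_lt h, ih, Nat.add_mod, Nat.mod_eq_of_lt h,
        qbinom_symm hodd hq h]
    · have hc : (m + n) % ℓ + ℓ = m % ℓ + n % ℓ :=
        Nat.add_mod_add_of_le_add_mod (not_lt.1 h)
      rw [qbinom_eq_zero q (show (m + n) % ℓ < m % ℓ by omega),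
        qbinom_eq_zero q (show (m + n) % ℓ < n % ℓ by omega), mul_zero, mul_zero]

/-- The cut-off in `lbinom` may be replaced by any larger one. -/
lemma lbinom_eq_prod {ℓ : ℕ} (hℓ : 1 < ℓ) (q : ℂ) (m n : ℕ) {N : ℕ} (hN : m + n + 1 ≤ N) :
    lbinom ℓ q m n = ∏ i ∈ Finset.range N, qbinom q (digit ℓ m i) (digit ℓ n i) := by
  refine Finset.prod_subset (Finset.range_mono hN) fun i _ hi => ?_
  rw [Finset.mem_range, not_lt] at hi
  have h : digit ℓ n i = 0 := by
    rw [digit, Nat.div_eq_of_lt ((show n < i by omega).trans (Nat.lt_pow_self hℓ)), Nat.zero_mod]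
  simp [h, qbinom]

/-- for all natural numbers `m` and `n`, the `ℓ`-adic q-binomial coefficients
satisfy `⟨m+n; m⟩_λ = ⟨m+n; n⟩_λ`. -/
theorem lbinom_add_left_eq_add_right (ℓ : ℕ) (hℓ : 1 < ℓ) (hodd : Odd ℓ) (q : ℂ)
    (hq : IsPrimitiveRoot q ℓ) (m n : ℕ) :
    lbinom ℓ q (m + n) m = lbinom ℓ q (m + n) n := by
  rw [lbinom_eq_prod hℓ q (m + n) m (N := m + n + m + n + 1) (by omega),
    lbinom_eq_prod hℓ q (m + n) n (N := m + n + m + n + 1) (by omega),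
    prod_digits_symm hℓ hodd hq]

end QD
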